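/- Let N ≥ 1, p > 1, and α ∈ ℝ be such that N > p+α. Then for every u ∈ C_c^∞(ℝ^N), ∫_{ℝ^N} |u(x)|^p / |x|^{p+α} dx ≤ ( p/(N−p−α) )^p ∫_{ℝ^N} |∇u(x)|^p / |x|^α dx. -/

import Mathlib

open MeasureTheory Metric Set
open scoped ENNReal

noncomputable section

/-- The surface measure on the unit sphere `S^{N-1} ⊆ ℝ^N` induced by the Lebesgue measure. -/
def sphereMeasure (N : ℕ) : Measure (sphere (0 : EuclideanSpace ℝ (Fin N)) 1) :=
  (volume : Measure (EuclideanSpace ℝ (Fin N))).toSphere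

open Classical in
/-- Extension of a function `g` on the unit sphere to `ℝ^N` as `x ↦ g (x/|x|)`
(with junk value `0` at the origin). -/
def sphereExt {N : ℕ} (g : sphere (0 : EuclideanSpace ℝ (Fin N)) 1 → ℝ)
    (x : EuclideanSpace ℝ (Fin N)) : ℝ :=
  if hx : ‖x‖⁻¹ • x ∈ sphere (0 : EuclideanSpace ℝ (Fin N)) 1 then g ⟨‖x‖⁻¹ • x, hx⟩ else 0

/-- The `L^q(S^{N-1})` norm `(∫_{S^{N-1}} |g|^q dθ)^{1/q}`. -/
def sphereLqNorm {N : ℕ} (q : ℝ) (g : sphere (0 : EuclideanSpace ℝ (Fin N)) 1 → ℝ) : ℝ :=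
  (∫ θ, |g θ| ^ q ∂(sphereMeasure N)) ^ (1 / q)

/-- The total surface measure `|S^{N-1}|` of the unit sphere in `ℝ^N`. -/
def sphereVol (N : ℕ) : ℝ := (sphereMeasure N univ).toReal

theorem lintegral_Ioi_one_rpow_neg {c : ℝ} (hc : 1 < c) :
    ∫⁻ t in Ioi (1 : ℝ), ENNReal.ofReal (t ^ (-c)) = ENNReal.ofReal (1 / (c - 1)) := by
  rw [← ofReal_integral_eq_lintegral_ofReal
    (integrableOn_Ioi_rpow_of_lt (by linarith) one_pos),
    integral_Ioi_rpow_of_lt (by linarith) one_pos]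
  · congr 1
    rw [Real.one_rpow, ← neg_sub, ← neg_div_neg_eq]
    ring_nf
  · filter_upwards [ae_restrict_mem measurableSet_Ioi] with t ht
    exact Real.rpow_nonneg (zero_le_one.trans (le_of_lt ht)) _

/-- Hölder's inequality on `(1, ∞)` against the weight `t ^ (-c)`. -/
theorem lintegral_Ioi_one_rpow_le {p c : ℝ} (hp : 1 < p) (hc : 1 < c) {h : ℝ → ℝ≥0∞}
    (hh : Measurable h) :
    (∫⁻ t in Ioi (1 : ℝ), h t) ^ p ≤ ENNReal.ofReal (1 / (c - 1)) ^ (p - 1) *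
      ∫⁻ t in Ioi (1 : ℝ), ENNReal.ofReal (t ^ (c * (p - 1))) * h t ^ p := by
  have hp0 : 0 < p := by linarith
  have hpq := Real.HolderConjugate.conjExponent hp
  set q := p.conjExponent
  have hq0 : q ≠ 0 := hpq.symm.ne_zero
  have hpq1 : p / q = p - 1 := hpq.div_conj_eq_sub_one
  have hold := ENNReal.lintegral_mul_le_Lp_mul_Lq (volume.restrict (Ioi (1 : ℝ))) hpq
    (f := fun t => ENNReal.ofReal (t ^ (c / q)) * h t)
    (g := fun t => ENNReal.ofReal (t ^ (-(c / q)))) (by fun_prop) (by fun_prop)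
  have hprod : ∫⁻ t in Ioi (1 : ℝ), h t = ∫⁻ t in Ioi (1 : ℝ),
      ((fun t => ENNReal.ofReal (t ^ (c / q)) * h t) *
        fun t => ENNReal.ofReal (t ^ (-(c / q)))) t := by
    refine setLIntegral_congr_fun measurableSet_Ioi fun t ht => ?_
    have ht0 : (0 : ℝ) < t := one_pos.trans ht
    simp only [Pi.mul_apply]
    rw [mul_right_comm, ← ENNReal.ofReal_mul (by positivity), ← Real.rpow_add ht0]
    simp
  have hfp : ∫⁻ t in Ioi (1 : ℝ), (ENNReal.ofReal (t ^ (c / q)) * h t) ^ p =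
      ∫⁻ t in Ioi (1 : ℝ), ENNReal.ofReal (t ^ (c * (p - 1))) * h t ^ p := by
    refine setLIntegral_congr_fun measurableSet_Ioi fun t ht => ?_
    have ht0 : (0 : ℝ) < t := one_pos.trans ht
    rw [ENNReal.mul_rpow_of_nonneg _ _ hp0.le,
      ENNReal.ofReal_rpow_of_nonneg (by positivity) hp0.le, ← Real.rpow_mul ht0.le, ← hpq1]
    congr 3
    ring
  have hgq : ∫⁻ t in Ioi (1 : ℝ), ENNReal.ofReal (t ^ (-(c / q))) ^ q =
      ENNReal.ofReal (1 / (c - 1)) := by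
    rw [← lintegral_Ioi_one_rpow_neg hc]
    refine setLIntegral_congr_fun measurableSet_Ioi fun t ht => ?_
    have ht0 : (0 : ℝ) < t := one_pos.trans ht
    rw [ENNReal.ofReal_rpow_of_nonneg (by positivity) hpq.symm.nonneg, ← Real.rpow_mul ht0.le]
    congr 2
    field_simp
  rw [← hprod, hfp, hgq] at hold
  calc (∫⁻ t in Ioi (1 : ℝ), h t) ^ p
      ≤ _ := ENNReal.rpow_le_rpow hold hp0.le
    _ = _ := by
      rw [ENNReal.mul_rpow_of_nonneg _ _ hp0.le, ← ENNReal.rpow_mul, ← ENNReal.rpow_mul,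
        one_div_mul_cancel hp0.ne', ENNReal.rpow_one, one_div_mul_eq_div, hpq1, mul_comm]

section

variable {E F : Type*} [NormedAddCommGroup E] [NormedSpace ℝ E]
  [NormedAddCommGroup F] [NormedSpace ℝ F]

/-- A compactly supported `C¹` function is controlled by its gradient along outgoing rays. -/
theorem HasCompactSupport.enorm_le_lintegral_fderiv_ray {u : E → F} (hu : ContDiff ℝ 1 u)
    (hsupp : HasCompactSupport u) {x : E} (hx : x ≠ 0) :
    ‖u x‖ₑ ≤ ∫⁻ t in Ioi (1 : ℝ), ‖fderiv ℝ u (t • x)‖ₑ * ‖x‖ₑ := by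
  have key := HasCompactSupport.enorm_le_lintegral_Ici_deriv (f := fun s : ℝ => u (s • (-x)))
    (hu.comp (by fun_prop))
    (hsupp.comp_isClosedEmbedding (isClosedEmbedding_smul_left (neg_ne_zero.2 hx))) (-1)
  have hderiv (s : ℝ) : ‖deriv (fun s : ℝ => u (s • (-x))) s‖ₑ ≤
      ‖fderiv ℝ u ((-s) • x)‖ₑ * ‖x‖ₑ := by
    have h1 : HasDerivAt (fun s : ℝ => s • (-x)) (-x) s := by
      simpa using (hasDerivAt_id s).smul_const (-x)
    have h2 := ((hu.differentiable one_ne_zero) (s • (-x))).hasFDerivAt.comp_hasDerivAt s h1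
    rw [show deriv (fun s : ℝ => u (s • (-x))) s = _ from h2.deriv, smul_neg, ← neg_smul]
    simpa using (fderiv ℝ u ((-s) • x)).le_opENorm (-x)
  calc ‖u x‖ₑ ≤ ∫⁻ s in Iic (-1 : ℝ), ‖deriv (fun s : ℝ => u (s • (-x))) s‖ₑ := by simpa using key
    _ ≤ ∫⁻ s in Iic (-1 : ℝ), ‖fderiv ℝ u ((-s) • x)‖ₑ * ‖x‖ₑ := lintegral_mono hderiv
    _ = ∫⁻ t in Ici (1 : ℝ), ‖fderiv ℝ u (t • x)‖ₑ * ‖x‖ₑ := by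
      have := (Measure.measurePreserving_neg (volume : Measure ℝ)).setLIntegral_comp_preimage_emb
        (MeasurableEquiv.neg ℝ).measurableEmbedding
        (fun t : ℝ => ‖fderiv ℝ u (t • x)‖ₑ * ‖x‖ₑ) (Ici 1)
      rw [← this]
      simp
    _ = _ := by rw [setLIntegral_congr Ioi_ae_eq_Ici]

variable [FiniteDimensional ℝ E] [MeasurableSpace E] [BorelSpace E]
  (μ : Measure E) [μ.IsAddHaarMeasure]

theorem lintegral_comp_smul_addHaar {t : ℝ} (ht : 0 < t) (g : E → ℝ≥0∞) :
    ∫⁻ x, g (t • x) ∂μ =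
      ENNReal.ofReal (t ^ (-(Module.finrank ℝ E : ℝ))) * ∫⁻ x, g x ∂μ := by
  have hemb : MeasurableEmbedding (fun x : E => t • x) :=
    (Homeomorph.smulOfNeZero t ht.ne').measurableEmbedding
  rw [← hemb.lintegral_map, Measure.map_addHaar_smul μ ht.ne', lintegral_smul_measure,
    Real.rpow_neg ht.le, Real.rpow_natCast, abs_of_pos (by positivity), smul_eq_mul]

/-- The weighted Hardy inequality for lower Lebesgue integrals. -/
theorem lintegral_weighted_hardy {p α : ℝ} (hp : 1 < p) (hα : p + α < Module.finrank ℝ E)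
    (hdim : 1 ≤ Module.finrank ℝ E) {u : E → F} (hu : ContDiff ℝ 1 u)
    (hsupp : HasCompactSupport u) :
    ∫⁻ x, ‖u x‖ₑ ^ p * ENNReal.ofReal (‖x‖ ^ (-(p + α))) ∂μ ≤
      ENNReal.ofReal (p / (Module.finrank ℝ E - p - α)) ^ p *
        ∫⁻ x, ‖fderiv ℝ u x‖ₑ ^ p * ENNReal.ofReal (‖x‖ ^ (-α)) ∂μ := by
  have hp0 : 0 < p := by linarith
  have : Nontrivial E := Module.nontrivial_of_finrank_pos (R := ℝ) hdim
  set d : ℝ := (Module.finrank ℝ E : ℝ)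
  set c : ℝ := (d - α) / p with hcdef
  have hc : 1 < c := by rw [hcdef, lt_div_iff₀ hp0]; linarith
  have hcp : c * p = d - α := by rw [hcdef]; field_simp
  have hK : p / (d - p - α) = 1 / (c - 1) := by
    have : d - p - α = p * (c - 1) := by linarith
    rw [this, div_mul_eq_div_div, div_self hp0.ne']
  set K : ℝ≥0∞ := ENNReal.ofReal (1 / (c - 1)) with hKdef
  set G : E → ℝ≥0∞ := fun x => ‖fderiv ℝ u x‖ₑ ^ p * ENNReal.ofReal (‖x‖ ^ (-α)) with hG
  have hcont : Continuous (fderiv ℝ u) := hu.continuous_fderiv one_ne_zero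
  have hmeas : Measurable fun y : E => ‖fderiv ℝ u y‖ₑ := hcont.enorm.measurable
  have hGm : Measurable G := by fun_prop
  have hpt : ∀ᵐ x ∂μ, ‖u x‖ₑ ^ p * ENNReal.ofReal (‖x‖ ^ (-(p + α))) ≤
      K ^ (p - 1) * ∫⁻ t in Ioi (1 : ℝ), ENNReal.ofReal (t ^ (c * (p - 1) + α)) * G (t • x) := by
    filter_upwards [compl_mem_ae_iff.2 (measure_singleton (μ := μ) (0 : E))] with x hx
    have hx0 : 0 < ‖x‖ := norm_pos_iff.2 hx
    have hm : Measurable fun t : ℝ => ‖fderiv ℝ u (t • x)‖ₑ * ‖x‖ₑ :=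
      (hmeas.comp (by fun_prop)).mul_const _
    calc ‖u x‖ₑ ^ p * ENNReal.ofReal (‖x‖ ^ (-(p + α)))
        ≤ (∫⁻ t in Ioi (1 : ℝ), ‖fderiv ℝ u (t • x)‖ₑ * ‖x‖ₑ) ^ p *
            ENNReal.ofReal (‖x‖ ^ (-(p + α))) := by
          gcongr
          exact hsupp.enorm_le_lintegral_fderiv_ray hu hx
      _ ≤ K ^ (p - 1) * (∫⁻ t in Ioi (1 : ℝ), ENNReal.ofReal (t ^ (c * (p - 1))) *
            (‖fderiv ℝ u (t • x)‖ₑ * ‖x‖ₑ) ^ p) * ENNReal.ofReal (‖x‖ ^ (-(p + α))) := by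
          gcongr
          exact lintegral_Ioi_one_rpow_le hp hc hm
      _ = _ := by
          rw [mul_assoc, ← lintegral_mul_const' _ _ ENNReal.ofReal_ne_top]
          congr 1
          refine setLIntegral_congr_fun measurableSet_Ioi fun t ht => ?_
          have ht0 : (0 : ℝ) < t := one_pos.trans ht
          have hw : ‖x‖ₑ ^ p * ENNReal.ofReal (‖x‖ ^ (-(p + α))) =
              ENNReal.ofReal (t ^ α) * ENNReal.ofReal (‖t • x‖ ^ (-α)) := by
            rw [← ofReal_norm, ENNReal.ofReal_rpow_of_nonneg hx0.le hp0.le,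
              ← ENNReal.ofReal_mul (by positivity), ← ENNReal.ofReal_mul (by positivity),
              ← Real.rpow_add hx0, norm_smul, Real.norm_of_nonneg ht0.le,
              Real.mul_rpow ht0.le hx0.le, ← mul_assoc, ← Real.rpow_add ht0]
            simp
          simp only [hG]
          rw [ENNReal.mul_rpow_of_nonneg _ _ hp0.le, Real.rpow_add ht0,
            ENNReal.ofReal_mul (by positivity)]
          calc _ = ENNReal.ofReal (t ^ (c * (p - 1))) * ‖fderiv ℝ u (t • x)‖ₑ ^ p *
                (‖x‖ₑ ^ p * ENNReal.ofReal (‖x‖ ^ (-(p + α)))) := by ring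
            _ = _ := by rw [hw]; ring
  calc ∫⁻ x, ‖u x‖ₑ ^ p * ENNReal.ofReal (‖x‖ ^ (-(p + α))) ∂μ
      ≤ ∫⁻ x, K ^ (p - 1) * (∫⁻ t in Ioi (1 : ℝ),
          ENNReal.ofReal (t ^ (c * (p - 1) + α)) * G (t • x)) ∂μ := lintegral_mono_ae hpt
    _ = K ^ (p - 1) * ∫⁻ t in Ioi (1 : ℝ), ∫⁻ x,
          ENNReal.ofReal (t ^ (c * (p - 1) + α)) * G (t • x) ∂μ := by
        rw [lintegral_const_mul' _ _
          (ENNReal.rpow_ne_top_of_nonneg (by linarith) ENNReal.ofReal_ne_top)]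
        rw [lintegral_lintegral_swap]
        have hs : Measurable fun z : E × ℝ => z.2 • z.1 := by fun_prop
        exact (Measurable.mul (by fun_prop) (hGm.comp hs)).aemeasurable
    _ = K ^ (p - 1) * ∫⁻ t in Ioi (1 : ℝ), ENNReal.ofReal (t ^ (-c)) * ∫⁻ x, G x ∂μ := by
        congr 1
        refine setLIntegral_congr_fun measurableSet_Ioi fun t ht => ?_
        have ht0 : (0 : ℝ) < t := one_pos.trans ht
        rw [lintegral_const_mul' _ _ ENNReal.ofReal_ne_top, lintegral_comp_smul_addHaar μ ht0,
          ← mul_assoc, ← ENNReal.ofReal_mul (by positivity), ← Real.rpow_add ht0]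
        congr 3
        linarith
    _ = K ^ (p - 1) * K * ∫⁻ x, G x ∂μ := by
        rw [lintegral_mul_const _ (by fun_prop), lintegral_Ioi_one_rpow_neg hc, mul_assoc]
    _ = _ := by
        rw [hK, ← hKdef]
        congr 1
        nth_rewrite 2 [← ENNReal.rpow_one K]
        rw [← ENNReal.rpow_add_of_nonneg _ _ (by linarith) zero_le_one, sub_add_cancel]

theorem integrable_norm_fderiv_rpow_div_norm_rpow {p α : ℝ} (hp : 0 < p)
    (hα : α < Module.finrank ℝ E) (hdim : 1 ≤ Module.finrank ℝ E) {u : E → F}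
    (hu : ContDiff ℝ 1 u) (hsupp : HasCompactSupport u) :
    Integrable (fun x => ‖fderiv ℝ u x‖ ^ p / ‖x‖ ^ α) μ := by
  have hcont : Continuous (fderiv ℝ u) := hu.continuous_fderiv one_ne_zero
  have hsupp' : HasCompactSupport (fderiv ℝ u) := hsupp.fderiv ℝ
  obtain ⟨C, hC⟩ := hsupp'.exists_bound_of_continuous hcont
  have hmeas : Measurable fun x : E => ‖fderiv ℝ u x‖ ^ p / ‖x‖ ^ α :=
    (hcont.norm.measurable.pow_const _).div (by fun_prop)
  have hloc : LocallyIntegrable (fun x => ‖fderiv ℝ u x‖ ^ p / ‖x‖ ^ α) μ := by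
    refine locallyIntegrable_of_norm_le_rpow (C := C ^ p) hdim hα (.of_forall fun x => ?_)
      hmeas.aestronglyMeasurable
    rw [Real.norm_of_nonneg (by positivity), Real.rpow_neg (norm_nonneg x), div_eq_mul_inv]
    gcongr
    exact hC x
  refine (integrableOn_iff_integrable_of_support_subset fun x hx => ?_).1
    (hloc.integrableOn_isCompact hsupp'.isCompact)
  refine subset_tsupport _ fun h => hx ?_
  simp [h, Real.zero_rpow hp.ne']

end

theorem sharp_weighted_hardy_CKN
    (N : ℕ) (hN : 1 ≤ N) (p α : ℝ) (hp : 1 < p) (hα : p + α < N)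
    (u : EuclideanSpace ℝ (Fin N) → ℝ) (hu : ContDiff ℝ (⊤ : ℕ∞) u) (husupp : HasCompactSupport u) :
    ∫ x : EuclideanSpace ℝ (Fin N), |u x| ^ p / ‖x‖ ^ (p + α) ≤
      (p / ((N : ℝ) - p - α)) ^ p * ∫ x : EuclideanSpace ℝ (Fin N), ‖fderiv ℝ u x‖ ^ p / ‖x‖ ^ α := by
  have hp0 : 0 < p := by linarith
  have hrank : Module.finrank ℝ (EuclideanSpace ℝ (Fin N)) = N := by simp
  have hu1 : ContDiff ℝ 1 u := hu.of_le (by exact_mod_cast le_top)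
  have hofReal (a b β : ℝ) (ha : 0 ≤ a) (hb : 0 ≤ b) :
      ENNReal.ofReal (a ^ p / b ^ β) = ENNReal.ofReal a ^ p * ENNReal.ofReal (b ^ (-β)) := by
    rw [ENNReal.ofReal_rpow_of_nonneg ha hp0.le, ← ENNReal.ofReal_mul (by positivity),
      Real.rpow_neg hb, div_eq_mul_inv]
  have hint := integrable_norm_fderiv_rpow_div_norm_rpow
    (volume : Measure (EuclideanSpace ℝ (Fin N))) hp0 (by rw [hrank]; linarith)
    (by rwa [hrank]) hu1 husupp (α := α)
  have hardy := lintegral_weighted_hardy (volume : Measure (EuclideanSpace ℝ (Fin N))) hp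
    (by rwa [hrank]) (by rwa [hrank]) hu1 husupp (α := α)
  have hconst : 0 < p / ((N : ℝ) - p - α) := div_pos hp0 (by linarith)
  have hmeas : Measurable fun x : EuclideanSpace ℝ (Fin N) => |u x| ^ p / ‖x‖ ^ (p + α) :=
    (hu.continuous.abs.measurable.pow_const _).div (by fun_prop)
  rw [integral_eq_lintegral_of_nonneg_ae (.of_forall fun x => by positivity)
    hmeas.aestronglyMeasurable]
  refine ENNReal.toReal_le_of_le_ofReal
    (mul_nonneg (by positivity) (integral_nonneg fun x => by positivity)) ?_
  rw [ENNReal.ofReal_mul (by positivity), ← ENNReal.ofReal_rpow_of_nonneg hconst.le hp0.le,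
    ofReal_integral_eq_lintegral_ofReal hint (.of_forall fun x => by positivity)]
  simp only [hofReal _ _ _ (norm_nonneg _) (norm_nonneg _), ofReal_norm, ← Real.norm_eq_abs]
  rwa [hrank] at hardy

end
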